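/- arXiv:1106.5163 — 2 statements merged into one kernel-verified Lean document; each statement's English description precedes it below -/
import Mathlib

section
/- Let 𝒢 be a finite dimensional split semisimple Lie algebra over a field 𝔽 of characteristic zero with splitting Cartan subalgebra ℋ and root system R. Let 𝒱 be a finite dimensional 𝒢-module with weight space decomposition with respect to ℋ and set of weights Π. If α ∈ R is a nonzero root and λ ∈ Π are such that α + λ ∈ Π, then 𝒢_α · 𝒱_λ ≠ {0}. -/
/-- The weight space of a module `V` over a Lie algebra `G` with respect to a
subalgebra `H`, for a functional `χ` on `H`: vectors on which every `h ∈ H`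
acts as multiplication by `χ h`. -/
def wtSpace {F G V : Type*} [Field F] [LieRing G] [LieAlgebra F G]
    [AddCommGroup V] [Module F V] [LieRingModule G V] [LieModule F G V]
    (H : LieSubalgebra F G) (χ : Module.Dual F H) : Submodule F V where
  carrier := {v | ∀ h : H, ⁅(h : G), v⁆ = χ h • v}
  add_mem' := by
    intro a b ha hb h
    rw [lie_add, ha h, hb h, smul_add]
  zero_mem' := by
    intro h
    simp
  smul_mem' := by
    intro c v hv h
    rw [lie_smul, hv h, smul_comm]

open LieModule LieAlgebra in
/-- In a finite dimensional `sl₂`-module, an `h`-eigenvector `w` of eigenvalue `n + 2` (`n` natural)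
cannot be annihilated by `e f`. -/
lemma sl2_lie_e_lie_f_ne_zero {F L M : Type*} [Field F] [CharZero F]
    [LieRing L] [LieAlgebra F L]
    [AddCommGroup M] [Module F M] [LieRingModule L M] [LieModule F L M]
    [FiniteDimensional F M] {h e f : L} (t : IsSl2Triple h e f) {w : M} (hw : w ≠ 0) (n : ℕ)
    (hh : ⁅h, w⁆ = ((n : F) + 2) • w) : ⁅e, ⁅f, w⁆⁆ ≠ 0 := by
  intro h0
  let ψ (k : ℕ) : M := ((toEnd F L M e) ^ k) w
  have hψ (k : ℕ) : ⁅h, ψ k⁆ = ((n : F) + 2 + 2 * k) • ψ k := t.lie_h_pow_toEnd_e hh k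
  have he (k : ℕ) : ⁅e, ψ k⁆ = ψ (k + 1) := IsSl2Triple.lie_e_pow_toEnd_e k
  have hfe (m : M) : ⁅f, ⁅e, m⁆⁆ = ⁅e, ⁅f, m⁆⁆ - ⁅h, m⁆ := by
    rw [leibniz_lie e f m, t.lie_e_f]; abel
  have hf (k : ℕ) : ⁅f, ψ (k + 1)⁆ = (-(((k : F) + 1) * (n + 2 + k))) • ψ k := by
    induction k with
    | zero =>
      rw [← he, hfe, hψ]
      have : ψ 0 = w := by simp [ψ]
      rw [this, h0, zero_sub, ← neg_smul]
      congr 1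
      push_cast; ring
    | succ k ih =>
      rw [← he, hfe, hψ, ih, lie_smul, he, ← sub_smul]
      congr 1
      push_cast; ring
  have hne (k : ℕ) : ψ k ≠ 0 := by
    induction k with
    | zero => simpa [ψ] using hw
    | succ k ih =>
      intro hz
      have h1 := hf k
      rw [hz, lie_zero, eq_comm, smul_eq_zero_iff_left ih, neg_eq_zero] at h1
      have : (((k + 1) * (n + 2 + k) : ℕ) : F) = 0 := by push_cast; exact h1
      rw [Nat.cast_eq_zero] at this
      simp at this
  let evals (k : ℕ) : F := (n : F) + 2 + 2 * k
  have h_inj : Function.Injective evals := fun a b hab ↦ by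
    simpa [evals] using hab
  have aux (μ : Set.range evals) :
      (toEnd F L M h).HasEigenvector μ (ψ μ.property.choose) := by
    refine ⟨?_, hne _⟩
    rw [Module.End.mem_eigenspace_iff, toEnd_apply_apply]
    exact (hψ _).trans (congrArg (fun r : F ↦ r • ψ μ.property.choose) μ.property.choose_spec)
  have _i := ((toEnd F L M h).eigenvectors_linearIndependent (Set.range evals) _ aux).finite
  exact (Set.infinite_range_of_injective h_inj) (Set.toFinite _)

/-- if `𝒢` is a finite dimensional split semisimple Lie algebra
over a field of characteristic zero, with splitting Cartan subalgebra `H` and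
root system `R`, and `V` is a finite dimensional `𝒢`-module with weight space
decomposition with respect to `H` and set of weights `Π`, then for a nonzero
root `α` and a weight `lam` with `α + lam` again a weight, `𝒢_α ⬝ V_lam ≠ 0`. -/
theorem stmt_0 {F G V : Type*} [Field F] [CharZero F]
    [LieRing G] [LieAlgebra F G]
    [AddCommGroup V] [Module F V] [LieRingModule G V] [LieModule F G V]
    [FiniteDimensional F G] [FiniteDimensional F V]
    [LieAlgebra.IsSemisimple F G]
    (H : LieSubalgebra F G) [H.IsCartanSubalgebra]
    (hGsplit : (⨆ χ : Module.Dual F H, (wtSpace H χ : Submodule F G)) = ⊤)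
    (hVsplit : (⨆ χ : Module.Dual F H, (wtSpace H χ : Submodule F V)) = ⊤)
    (α lam : Module.Dual F H)
    (hα : (wtSpace H α : Submodule F G) ≠ ⊥) (hα0 : α ≠ 0)
    (hlam : (wtSpace H lam : Submodule F V) ≠ ⊥)
    (hsum : (wtSpace H (α + lam) : Submodule F V) ≠ ⊥) :
    ∃ x ∈ (wtSpace H α : Submodule F G), ∃ v ∈ (wtSpace H lam : Submodule F V),
      ⁅x, v⁆ ≠ 0 := by
  classical
  have hT : LieModule.IsTriangularizable F H G := by
    refine ⟨fun x ↦ ?_⟩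
    rw [eq_top_iff, ← hGsplit]
    refine iSup_le fun χ ↦ ?_
    refine le_trans (fun v hv ↦ ?_) (le_iSup _ (χ x))
    refine Module.End.eigenspace_le_maxGenEigenspace ?_
    rw [Module.End.mem_eigenspace_iff]
    exact hv x
  have hmem (χ : Module.Dual F H) (x : G) (hx : x ∈ (wtSpace H χ : Submodule F G)) :
      x ∈ LieAlgebra.rootSpace H χ :=
    LieModule.weightSpace_le_genWeightSpace G _ ((LieModule.mem_weightSpace _ _).mpr hx)
  obtain ⟨x₀, hx₀, hx₀'⟩ := (Submodule.ne_bot_iff _).mp hα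
  let a : LieModule.Weight F H G := ⟨α, fun hb ↦ hx₀' (by
    have h1 : x₀ ∈ LieModule.genWeightSpace G (α : H → F) := hmem α x₀ hx₀
    exact (LieSubmodule.mem_bot x₀).mp (hb.le h1))⟩
  have ha : a.IsNonZero := fun hz ↦ hα0 (by
    ext y
    exact congrFun hz y)
  obtain ⟨h, e, f, t, he, hf⟩ :=
    LieAlgebra.IsKilling.exists_isSl2Triple_of_weight_isNonZero ha
  have hhH := t.h_eq_coroot ha he hf
  set c : H := LieAlgebra.IsKilling.coroot a
  have he' (y : H) : ⁅(y : G), e⁆ = α y • e :=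
    LieAlgebra.IsKilling.lie_eq_smul_of_mem_rootSpace he y
  have hf' (y : H) : ⁅(y : G), f⁆ = -(α y) • f :=
    LieAlgebra.IsKilling.lie_eq_smul_of_mem_rootSpace hf y
  have hαc : α c = 2 := LieAlgebra.IsKilling.root_apply_coroot ha
  by_contra! hcon
  obtain ⟨v, hv, hv0⟩ := (Submodule.ne_bot_iff _).mp hlam
  obtain ⟨w, hw, hw0⟩ := (Submodule.ne_bot_iff _).mp hsum
  have P : t.HasPrimitiveVectorWith v (lam c) :=
    ⟨hv0, by rw [hhH]; exact hv c, hcon e he' v hv⟩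
  obtain ⟨n, hn⟩ := P.exists_nat
  refine sl2_lie_e_lie_f_ne_zero t hw0 n (by
    rw [hhH, hw c, LinearMap.add_apply, hn, hαc, add_comm]) (hcon e he' _ fun y ↦ ?_)
  rw [leibniz_lie, hf', hw y, smul_lie, lie_smul, ← add_smul, LinearMap.add_apply]
  congr 1
  ring
end

section
/- Let 𝒢 be a finite dimensional split semisimple Lie algebra with splitting Cartan subalgebra ℋ, root system R, nonzero root α ∈ R, and λ ∈ Π a weight of a finite dimensional 𝒢-module 𝒱 with weight space decomposition. If α + λ ∈ Π and dim 𝒱_{λ+α} = 1, then 𝒢_α · 𝒱_λ = 𝒱_{λ+α}. -/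
open LieAlgebra LieModule in
/-- The `sl₂`-triple attached to a root, in terms of `wtSpace`. -/
theorem exists_sl2_aux {F G : Type*} [Field F] [CharZero F]
    [LieRing G] [LieAlgebra F G] [FiniteDimensional F G] [LieAlgebra.IsSemisimple F G]
    (H : LieSubalgebra F G) [H.IsCartanSubalgebra]
    (hGsplit : (⨆ χ : Module.Dual F H, (wtSpace H χ : Submodule F G)) = ⊤)
    (α : Module.Dual F H)
    (hα : (wtSpace H α : Submodule F G) ≠ ⊥) (hα0 : α ≠ 0) :
    ∃ (h : H) (e f : G), IsSl2Triple (h : G) e f ∧ e ∈ (wtSpace H α : Submodule F G) ∧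
      (∀ k : H, ⁅(k : G), f⁆ = -(α k) • f) ∧ α h = 2 := by
  have : IsTriangularizable F H G := by
    constructor
    intro x
    rw [eq_top_iff, ← hGsplit]
    refine iSup_le fun χ => le_trans ?_ (le_iSup _ (χ x))
    intro v hv
    refine Module.End.mem_maxGenEigenspace _ _ _ |>.mpr ⟨1, ?_⟩
    have := hv x
    simp [this]
  have hne : genWeightSpace G (α : H → F) ≠ ⊥ := by
    obtain ⟨v, hv, hv0⟩ := (Submodule.ne_bot_iff _).mp hα
    intro hb
    have : v ∈ genWeightSpace G (α : H → F) :=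
      weightSpace_le_genWeightSpace _ _ ((mem_weightSpace _ _).mpr fun x => hv x)
    rw [hb] at this
    exact hv0 (by simpa using this)
  let a : Weight F H G := ⟨α, hne⟩
  have ha : a.IsNonZero := by
    intro h0
    apply hα0
    ext x
    exact congrFun h0 x
  obtain ⟨h, e, f, ht, he, hf⟩ := IsKilling.exists_isSl2Triple_of_weight_isNonZero ha
  have hh := ht.h_eq_coroot ha he hf
  subst hh
  refine ⟨_, e, f, ht, fun k => IsKilling.lie_eq_smul_of_mem_rootSpace he k, fun k => ?_,
    IsKilling.root_apply_coroot ha⟩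
  exact IsKilling.lie_eq_smul_of_mem_rootSpace hf k

theorem sl2_aux {F G V : Type*} [Field F] [CharZero F]
    [LieRing G] [LieAlgebra F G]
    [AddCommGroup V] [Module F V] [LieRingModule G V] [LieModule F G V]
    [FiniteDimensional F V] {h e f : G} (t : IsSl2Triple h e f) (w : V) (hw : w ≠ 0) (n : ℕ)
    (hh : ⁅h, w⁆ = ((n : F) + 2) • w) (hef : ⁅e, ⁅f, w⁆⁆ = 0) : False := by
  let E := LieModule.toEnd F G V e
  have hs : ∀ k, (E ^ (k + 1)) w = ⁅e, (E ^ k) w⁆ := fun k => by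
    rw [pow_succ']; rfl
  have h1 : ∀ k : ℕ, ⁅h, (E ^ k) w⁆ = ((n : F) + 2 + 2 * k) • (E ^ k) w := by
    intro k
    induction k with
    | zero => simpa using hh
    | succ k ih =>
      rw [hs, leibniz_lie, ih, t.lie_h_e_smul F, smul_lie, lie_smul, ← add_smul]
      congr 1
      push_cast
      ring
  have h2 : ∀ k : ℕ, ⁅f, (E ^ (k + 1)) w⁆ = (-((k : F) + 1) * (n + 2 + k)) • (E ^ k) w := by
    have hfe : ∀ x : V, ⁅f, ⁅e, x⁆⁆ = ⁅e, ⁅f, x⁆⁆ - ⁅h, x⁆ := fun x => by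
      rw [← t.lie_e_f, lie_lie]; abel
    intro k
    induction k with
    | zero =>
      rw [hs, hfe]
      simp only [pow_zero, Module.End.one_apply, hef, hh]
      rw [zero_sub, ← neg_smul]
      congr 1
      push_cast
      ring
    | succ k ih =>
      rw [hs, hfe, ih, lie_smul, ← hs, h1, ← sub_smul]
      congr 1
      push_cast
      ring
  have h3 : ∀ k : ℕ, (E ^ k) w ≠ 0 := by
    intro k
    induction k with
    | zero => simpa using hw
    | succ k ih =>
      intro h0
      have := h2 k
      rw [h0, lie_zero, eq_comm, smul_eq_zero_iff_left ih] at this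
      have h4 : (((k + 1) * (n + 2 + k) : ℕ) : F) = 0 := by
        push_cast
        linear_combination -this
      rw [Nat.cast_eq_zero] at h4
      simp at h4
  have hfin := Module.End.finite_hasEigenvalue (LieModule.toEnd F G V h)
  refine Set.infinite_of_injective_forall_mem (f := fun k : ℕ => (n : F) + 2 + 2 * k) ?_ ?_ hfin
  · intro a b hab
    simpa using hab
  · intro k
    exact Module.End.hasEigenvalue_of_hasEigenvector
      (x := (E ^ k) w) ⟨Module.End.mem_eigenspace_iff.mpr (h1 k), h3 k⟩

/-- in the setting of a finite dimensional split semisimple Lie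
algebra `𝒢` with splitting Cartan subalgebra `H`, root system `R`, a nonzero
root `α`, and a weight `lam` of a finite dimensional `𝒢`-module `V` with weight
space decomposition, if `lam + α` is a weight and `dim V_{lam+α} = 1`, then
`𝒢_α ⬝ V_lam = V_{lam+α}`. -/
theorem stmt_1 {F G V : Type*} [Field F] [CharZero F]
    [LieRing G] [LieAlgebra F G]
    [AddCommGroup V] [Module F V] [LieRingModule G V] [LieModule F G V]
    [FiniteDimensional F G] [FiniteDimensional F V]
    [LieAlgebra.IsSemisimple F G]
    (H : LieSubalgebra F G) [H.IsCartanSubalgebra]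
    (hGsplit : (⨆ χ : Module.Dual F H, (wtSpace H χ : Submodule F G)) = ⊤)
    (hVsplit : (⨆ χ : Module.Dual F H, (wtSpace H χ : Submodule F V)) = ⊤)
    (α lam : Module.Dual F H)
    (hα : (wtSpace H α : Submodule F G) ≠ ⊥) (hα0 : α ≠ 0)
    (hlam : (wtSpace H lam : Submodule F V) ≠ ⊥)
    (hsum : (wtSpace H (lam + α) : Submodule F V) ≠ ⊥)
    (hdim : Module.finrank F (wtSpace H (lam + α) : Submodule F V) = 1) :
    Submodule.span F {u : V | ∃ x ∈ (wtSpace H α : Submodule F G),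
        ∃ v ∈ (wtSpace H lam : Submodule F V), u = ⁅x, v⁆} =
      (wtSpace H (lam + α) : Submodule F V) := by
  obtain ⟨h, e, f, t, he, hf, h2⟩ := exists_sl2_aux H hGsplit α hα hα0
  have hle : Submodule.span F {u : V | ∃ x ∈ (wtSpace H α : Submodule F G),
        ∃ v ∈ (wtSpace H lam : Submodule F V), u = ⁅x, v⁆} ≤
      (wtSpace H (lam + α) : Submodule F V) := by
    rw [Submodule.span_le]
    rintro _ ⟨x, hx, v, hv, rfl⟩ k
    rw [leibniz_lie, hx k, hv k, smul_lie, lie_smul, ← add_smul, LinearMap.add_apply, add_comm]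
  refine Submodule.eq_of_le_of_finrank_le hle ?_
  rw [hdim, Nat.one_le_iff_ne_zero, Ne, Submodule.finrank_eq_zero]
  intro hbot
  have hz : ∀ v ∈ (wtSpace H lam : Submodule F V), ⁅e, v⁆ = 0 := fun v hv => by
    have : ⁅e, v⁆ ∈ (⊥ : Submodule F V) := by
      rw [← hbot]
      exact Submodule.subset_span ⟨e, he, v, hv, rfl⟩
    simpa using this
  obtain ⟨v, hv, hv0⟩ := (Submodule.ne_bot_iff _).mp hlam
  obtain ⟨w, hw, hw0⟩ := (Submodule.ne_bot_iff _).mp hsum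
  have P : t.HasPrimitiveVectorWith v (lam h) := ⟨hv0, hv h, hz v hv⟩
  obtain ⟨n, hn⟩ := P.exists_nat
  refine sl2_aux (F := F) t w hw0 n ?_ (hz _ fun k => ?_)
  · rw [hw h, LinearMap.add_apply, hn, h2]
  · rw [leibniz_lie, hf k, hw k, smul_lie, lie_smul, ← add_smul, LinearMap.add_apply]
    congr 1
    ring
end
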